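/- arXiv:math/0608199 — 3 statements merged into one kernel-verified Lean document; each statement's English description precedes it below -/
import Mathlib

section
/- Let G be a simple graph on vertex set [n] and let 1 ≤ s < ω(G). Then there exists y ∈ S_s(G) such that f_{s+1}(G,y) ≥ f_{s+1}(G,x) for all x ∈ S_s(G), and the support {v ∈ [n] : y_v > 0} induces a complete subgraph of G. -/
open Finset

/-- `fClique G s x` is the clique polynomial `f_s(G,x) = Σ_{S an s-clique of G} Π_{i ∈ S} x_i`. -/
def fClique {n : ℕ} (G : SimpleGraph (Fin n)) [DecidableRel G.Adj] (s : ℕ)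
    (x : Fin n → ℝ) : ℝ :=
  ∑ S ∈ G.cliqueFinset s, ∏ i ∈ S, x i

/-!
If `u` and `v` are non-adjacent, no clique contains both, so every `f_s` is jointly affine in
`(x_u, x_v)`. Moving along the line on which `f_s` is constant, in the direction in which `f_{s+1}`
does not decrease, one of the two coordinates can be driven to `0`. Iterating, every point of
`S_s(G)` is dominated by one whose support is a clique. Among points with clique support, those
with `f_{s+1} ≥ δ > 0` form a compact set: some `(s+1)`-clique has all its weights bounded below,
and any vertex `v` of the support spans an `s`-clique with `s - 1` vertices of it, which bounds
`x_v` since `f_s = 1`.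
-/

section

open Function Set

variable {n : ℕ} {G : SimpleGraph (Fin n)} [DecidableRel G.Adj] {s : ℕ} {u v : Fin n}
  {x : Fin n → ℝ} {S : Finset (Fin n)}

lemma erase_mem_cliqueFinset (hS : S ∈ G.cliqueFinset (s + 1)) (hu : u ∈ S) :
    S.erase u ∈ G.cliqueFinset s := by
  rw [SimpleGraph.mem_cliqueFinset_iff] at hS ⊢
  exact hS.erase_of_mem hu

lemma fClique_nonneg (hx : 0 ≤ x) : 0 ≤ fClique G s x :=
  sum_nonneg fun _ _ ↦ prod_nonneg fun i _ ↦ hx i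

lemma prod_le_fClique (hx : 0 ≤ x) (hS : S ∈ G.cliqueFinset s) :
    ∏ i ∈ S, x i ≤ fClique G s x :=
  single_le_sum (f := fun S ↦ ∏ i ∈ S, x i) (fun _ _ ↦ prod_nonneg fun i _ ↦ hx i) hS

lemma prod_le_mul_fClique (hx : 0 ≤ x) (hS : S ∈ G.cliqueFinset (s + 1)) (hu : u ∈ S) :
    ∏ i ∈ S, x i ≤ x u * fClique G s x := by
  rw [← mul_prod_erase S x hu]
  exact mul_le_mul_of_nonneg_left (prod_le_fClique hx (erase_mem_cliqueFinset hS hu)) (hx u)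

lemma continuous_fClique : Continuous (fClique G s) := by
  unfold fClique
  fun_prop

lemma fClique_smul (c : ℝ) : fClique G s (c • x) = c ^ s * fClique G s x := by
  simp only [fClique, mul_sum]
  refine sum_congr rfl fun S hS ↦ ?_
  simp only [Pi.smul_apply, smul_eq_mul, prod_mul_distrib, prod_const,
    (SimpleGraph.mem_cliqueFinset_iff.1 hS).card_eq]

lemma exists_fClique_smul_eq_one (hs : s ≠ 0) (hx : 0 < fClique G s x) :
    ∃ c : ℝ, 0 < c ∧ fClique G s (c • x) = 1 := by
  refine ⟨(fClique G s x)⁻¹ ^ (s : ℝ)⁻¹, Real.rpow_pos_of_pos (inv_pos.2 hx) _, ?_⟩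
  rw [fClique_smul, Real.rpow_inv_natCast_pow (inv_nonneg.2 hx.le) hs, inv_mul_cancel₀ hx.ne']

lemma fClique_indicator_pos (hS : G.IsClique S) (hs : s ≤ #S) :
    0 < fClique G s (indicator (S : Set (Fin n)) 1) := by
  obtain ⟨T, hTS, hT⟩ := exists_subset_card_eq hs
  have hT_mem : T ∈ G.cliqueFinset s :=
    SimpleGraph.mem_cliqueFinset_iff.2 ⟨hS.subset (coe_subset.2 hTS), hT⟩
  have hT_prod : ∏ i ∈ T, indicator (S : Set (Fin n)) (1 : Fin n → ℝ) i = 1 :=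
    prod_eq_one fun i hi ↦ indicator_of_mem (mem_coe.2 (hTS hi)) 1
  exact zero_lt_one.trans_le <|
    hT_prod ▸ prod_le_fClique (indicator_nonneg fun _ _ ↦ zero_le_one) hT_mem

/-- The partial derivative of `f_s(G, ·)` with respect to the weight of the vertex `u`. As `f_s` is
affine in each variable, this is the coefficient of `x_u`. -/
def cliqueDeriv (G : SimpleGraph (Fin n)) [DecidableRel G.Adj] (s : ℕ) (u : Fin n)
    (x : Fin n → ℝ) : ℝ :=
  ∑ S ∈ G.cliqueFinset s with u ∈ S, ∏ i ∈ S.erase u, x i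

lemma cliqueDeriv_nonneg (hx : 0 ≤ x) : 0 ≤ cliqueDeriv G s u x :=
  sum_nonneg fun _ _ ↦ prod_nonneg fun i _ ↦ hx i

lemma cliqueDeriv_succ_eq_zero (hs : s ≠ 0) (hx : 0 ≤ x) (h : cliqueDeriv G s u x = 0) :
    cliqueDeriv G (s + 1) u x = 0 := by
  rw [cliqueDeriv, sum_eq_zero_iff_of_nonneg fun _ _ ↦ prod_nonneg fun i _ ↦ hx i] at h
  refine sum_eq_zero fun S hS ↦ ?_
  obtain ⟨hS, hu⟩ := Finset.mem_filter.1 hS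
  have hcard : #(S.erase u) = s :=
    (SimpleGraph.mem_cliqueFinset_iff.1 (erase_mem_cliqueFinset hS hu)).card_eq
  obtain ⟨w, hw⟩ : (S.erase u).Nonempty := card_ne_zero.1 (hcard ▸ hs)
  obtain ⟨hwu, hwS⟩ := Finset.mem_erase.1 hw
  have hzero : ∏ i ∈ (S.erase w).erase u, x i = 0 :=
    h _ (Finset.mem_filter.2 ⟨erase_mem_cliqueFinset hS hwS, Finset.mem_erase.2 ⟨hwu.symm, hu⟩⟩)
  rw [← mul_prod_erase _ _ hw, erase_right_comm, hzero, mul_zero]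

lemma fClique_update (t : ℝ) :
    fClique G s (update x u t) = fClique G s x + (t - x u) * cliqueDeriv G s u x := by
  simp only [fClique, cliqueDeriv, sum_filter, mul_sum, ← sum_add_distrib]
  refine sum_congr rfl fun S _ ↦ ?_
  by_cases hu : u ∈ S
  · rw [prod_update_of_mem hu, sdiff_singleton_eq_erase, ← mul_prod_erase S x hu, if_pos hu]
    ring
  · rw [prod_update_of_notMem hu, if_neg hu, mul_zero, add_zero]

lemma cliqueDeriv_update_of_not_adj (h : ¬ G.Adj u v) (t : ℝ) :
    cliqueDeriv G s u (update x v t) = cliqueDeriv G s u x := by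
  refine sum_congr rfl fun S hS ↦ prod_update_of_notMem (fun hv ↦ h ?_) x t
  obtain ⟨hS, hu⟩ := Finset.mem_filter.1 hS
  obtain ⟨hvu, hv⟩ := Finset.mem_erase.1 hv
  exact (SimpleGraph.mem_cliqueFinset_iff.1 hS).isClique hu hv hvu.symm

lemma fClique_update_update_of_not_adj (huv : u ≠ v) (h : ¬ G.Adj u v) (a b : ℝ) :
    fClique G s (update (update x v b) u a) =
      fClique G s x + (a - x u) * cliqueDeriv G s u x + (b - x v) * cliqueDeriv G s v x := by
  rw [fClique_update, fClique_update, update_of_ne huv, cliqueDeriv_update_of_not_adj h]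
  ring

/-- `z` can replace `x` in the search for a maximizer of `f_{s+1}(G, ·)` on a level set of
`f_s(G, ·)`. -/
structure CliqueDominates (G : SimpleGraph (Fin n)) [DecidableRel G.Adj] (s : ℕ)
    (z x : Fin n → ℝ) : Prop where
  nonneg : 0 ≤ z
  fClique_eq : fClique G s z = fClique G s x
  fClique_succ_le : fClique G (s + 1) x ≤ fClique G (s + 1) z

lemma CliqueDominates.refl (hx : 0 ≤ x) : CliqueDominates G s x x := ⟨hx, rfl, le_rfl⟩

lemma CliqueDominates.trans {y z : Fin n → ℝ} (hzy : CliqueDominates G s z y)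
    (hyx : CliqueDominates G s y x) : CliqueDominates G s z x :=
  ⟨hzy.nonneg, hzy.fClique_eq.trans hyx.fClique_eq,
    hyx.fClique_succ_le.trans hzy.fClique_succ_le⟩

lemma exists_support_ssubset_of_cliqueDeriv_eq_zero (hs : s ≠ 0) (hx : 0 ≤ x) (hv : x v ≠ 0)
    (h : cliqueDeriv G s v x = 0) :
    ∃ z, CliqueDominates G s z x ∧ support z ⊂ support x := by
  refine ⟨update x v 0, ⟨le_update_iff.2 ⟨le_rfl, fun i _ ↦ hx i⟩, ?_, ?_⟩, ?_⟩
  · rw [fClique_update, h, mul_zero, add_zero]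
  · rw [fClique_update, cliqueDeriv_succ_eq_zero hs hx h, mul_zero, add_zero]
  · rw [support_update_zero]
    exact sdiff_singleton_ssubset.2 hv

lemma exists_support_ssubset_of_cliqueDeriv_mul_le (hx : 0 ≤ x) (huv : u ≠ v) (h : ¬ G.Adj u v)
    (hu : x u ≠ 0) (hv : x v ≠ 0) (hpos : 0 < cliqueDeriv G s u x)
    (hle : cliqueDeriv G (s + 1) v x * cliqueDeriv G s u x ≤
      cliqueDeriv G (s + 1) u x * cliqueDeriv G s v x) :
    ∃ z, CliqueDominates G s z x ∧ support z ⊂ support x := by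
  -- The increase of `x_u` that keeps `f_s` constant when `x_v` drops to `0`.
  set t := x v * (cliqueDeriv G s v x / cliqueDeriv G s u x) with ht
  have ht_nonneg : 0 ≤ t := mul_nonneg (hx v) (div_nonneg (cliqueDeriv_nonneg hx) hpos.le)
  have ht_eq : t * cliqueDeriv G s u x = x v * cliqueDeriv G s v x := by
    rw [ht, mul_assoc, div_mul_cancel₀ _ hpos.ne']
  have ht_le : x v * cliqueDeriv G (s + 1) v x ≤ t * cliqueDeriv G (s + 1) u x := by
    rw [ht, mul_assoc, div_mul_eq_mul_div, mul_comm (cliqueDeriv G s v x)]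
    exact mul_le_mul_of_nonneg_left ((le_div_iff₀ hpos).2 hle) (hx v)
  have hxu : 0 < x u := (hx u).lt_of_ne' hu
  refine ⟨update (update x v 0) u (x u + t), ⟨?_, ?_, ?_⟩, ?_⟩
  · exact le_update_iff.2 ⟨(add_pos_of_pos_of_nonneg hxu ht_nonneg).le, fun i _ ↦
      (le_update_iff (x := (0 : Fin n → ℝ))).2 ⟨le_rfl, fun i _ ↦ hx i⟩ i⟩
  · rw [fClique_update_update_of_not_adj huv h]
    linarith
  · rw [fClique_update_update_of_not_adj huv h]
    linarith
  · rw [support_update_of_ne_zero _ _ (add_pos_of_pos_of_nonneg hxu ht_nonneg).ne',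
      support_update_zero, insert_eq_of_mem (show u ∈ support x \ {v} from ⟨hu, huv⟩)]
    exact sdiff_singleton_ssubset.2 hv

lemma exists_support_ssubset_of_not_adj (hs : s ≠ 0) (hx : 0 ≤ x) (huv : u ≠ v) (h : ¬ G.Adj u v)
    (hu : x u ≠ 0) (hv : x v ≠ 0) :
    ∃ z, CliqueDominates G s z x ∧ support z ⊂ support x := by
  obtain hu_zero | hu_pos := (cliqueDeriv_nonneg (G := G) (s := s) (u := u) hx).eq_or_lt'
  · exact exists_support_ssubset_of_cliqueDeriv_eq_zero hs hx hu hu_zero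
  obtain hv_zero | hv_pos := (cliqueDeriv_nonneg (G := G) (s := s) (u := v) hx).eq_or_lt'
  · exact exists_support_ssubset_of_cliqueDeriv_eq_zero hs hx hv hv_zero
  obtain hle | hle := le_total (cliqueDeriv G (s + 1) v x * cliqueDeriv G s u x)
    (cliqueDeriv G (s + 1) u x * cliqueDeriv G s v x)
  · exact exists_support_ssubset_of_cliqueDeriv_mul_le hx huv h hu hv hu_pos hle
  · exact exists_support_ssubset_of_cliqueDeriv_mul_le hx huv.symm (mt (·.symm) h) hv hu hv_pos hle

lemma exists_cliqueDominates_isClique_support (hs : s ≠ 0) (hx : 0 ≤ x) :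
    ∃ z, CliqueDominates G s z x ∧ G.IsClique (support z) := by
  induction hA : support x using WellFoundedLT.induction generalizing x with
  | ind A ih =>
    by_cases hclique : G.IsClique (support x)
    · exact ⟨x, .refl hx, hclique⟩
    simp only [SimpleGraph.isClique_iff, Set.Pairwise, not_forall] at hclique
    obtain ⟨u, hu, v, hv, huv, hadj⟩ := hclique
    obtain ⟨y, hyx, hy_supp⟩ := exists_support_ssubset_of_not_adj hs hx huv hadj hu hv
    obtain ⟨z, hzy, hz_clique⟩ := ih _ (hA ▸ hy_supp) hyx.nonneg rfl
    exact ⟨z, hzy.trans hyx, hz_clique⟩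

lemma isClosed_setOf_isClique_support {V : Type*} (G : SimpleGraph V) :
    IsClosed {x : V → ℝ | G.IsClique (support x)} := by
  have hset : {x : V → ℝ | G.IsClique (support x)} =
      {x | ∀ u v, u ≠ v → ¬ G.Adj u v → x u * x v = 0} := by
    ext x
    simp only [SimpleGraph.isClique_iff, Set.Pairwise, mem_support, mem_ofPred_eq, mul_eq_zero]
    grind
  simp only [hset, ofPred_forall]
  exact isClosed_iInter fun u ↦ isClosed_iInter fun v ↦ isClosed_iInter fun _ ↦
    isClosed_iInter fun _ ↦ isClosed_eq (by fun_prop) continuous_const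

/-- The points of `S_s(G) = {x : x ≥ 0, f_s(G,x) = 1}` whose support is a clique of `G`. -/
def cliqueLevelSet (G : SimpleGraph (Fin n)) [DecidableRel G.Adj] (s : ℕ) : Set (Fin n → ℝ) :=
  {x | 0 ≤ x ∧ fClique G s x = 1 ∧ G.IsClique (support x)}

lemma isClosed_cliqueLevelSet : IsClosed (cliqueLevelSet G s) :=
  isClosed_Ici.inter <| (isClosed_eq continuous_fClique continuous_const).inter <|
    isClosed_setOf_isClique_support G

lemma exists_mem_cliqueLevelSet_fClique_succ_pos (hs : s ≠ 0) (hsw : s < G.cliqueNum) :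
    ∃ x ∈ cliqueLevelSet G s, 0 < fClique G (s + 1) x := by
  obtain ⟨K, hK⟩ := G.exists_isNClique_cliqueNum
  have hcard : s + 1 ≤ #K := hK.card_eq ▸ hsw
  obtain ⟨c, hc, hc_eq⟩ := exists_fClique_smul_eq_one hs
    (fClique_indicator_pos hK.isClique (Nat.le_of_succ_le hcard))
  refine ⟨c • indicator (K : Set (Fin n)) 1, ⟨?_, hc_eq, ?_⟩, ?_⟩
  · exact smul_nonneg hc.le (indicator_nonneg fun _ _ ↦ zero_le_one)
  · rw [support_const_smul_of_ne_zero _ _ hc.ne']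
    exact hK.isClique.subset support_indicator_subset
  · rw [fClique_smul]
    exact mul_pos (pow_pos hc _) (fClique_indicator_pos hK.isClique hcard)

lemma mul_pow_le_fClique_succ (hx : 0 ≤ x) (hclique : G.IsClique (support x)) {ε : ℝ} (hε : 0 < ε)
    (hcard : s + 1 ≤ #S) (hS : ∀ i ∈ S, ε ≤ x i) :
    x v * ε ^ s ≤ fClique G (s + 1) x := by
  obtain hv | hv := eq_or_ne (x v) 0
  · rw [hv, zero_mul]
    exact fClique_nonneg hx
  obtain ⟨T, hTS, hT⟩ : ∃ T ⊆ S.erase v, #T = s :=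
    exists_subset_card_eq <| (Nat.le_sub_one_of_lt hcard).trans pred_card_le_card_erase
  have hvT : v ∉ T := fun h ↦ notMem_erase v S (hTS h)
  have hTε : ∀ i ∈ T, ε ≤ x i := fun i hi ↦ hS i (mem_of_mem_erase (hTS hi))
  have hsupp : ((insert v T : Finset (Fin n)) : Set (Fin n)) ⊆ support x := by
    rw [coe_insert]
    exact insert_subset hv fun i hi ↦ (hε.trans_le (hTε i hi)).ne'
  have hmem : insert v T ∈ G.cliqueFinset (s + 1) := SimpleGraph.mem_cliqueFinset_iff.2
    ⟨hclique.subset hsupp, by rw [card_insert_of_notMem hvT, hT]⟩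
  calc x v * ε ^ s = x v * ∏ _i ∈ T, ε := by rw [prod_const, hT]
    _ ≤ x v * ∏ i ∈ T, x i :=
      mul_le_mul_of_nonneg_left (prod_le_prod (fun _ _ ↦ hε.le) hTε) (hx v)
    _ = ∏ i ∈ insert v T, x i := (prod_insert hvT).symm
    _ ≤ fClique G (s + 1) x := prod_le_fClique hx hmem

lemma exists_clique_forall_le_of_le_fClique_succ (hx : 0 ≤ x) (hx_eq : fClique G s x = 1) {δ : ℝ}
    (hδ : 0 < δ) (hle : δ ≤ fClique G (s + 1) x) :
    ∃ S ∈ G.cliqueFinset (s + 1), ∀ i ∈ S, δ / #(G.cliqueFinset (s + 1)) ≤ x i := by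
  have hne : (G.cliqueFinset (s + 1)).Nonempty :=
    nonempty_of_sum_ne_zero (hδ.trans_le hle).ne'
  obtain ⟨S, hS, hS_le⟩ : ∃ S ∈ G.cliqueFinset (s + 1),
      δ / #(G.cliqueFinset (s + 1)) ≤ ∏ i ∈ S, x i := by
    refine exists_le_of_sum_le hne ?_
    rwa [sum_const, nsmul_eq_mul, mul_div_cancel₀ δ (Nat.cast_ne_zero.2 hne.card_ne_zero)]
  refine ⟨S, hS, fun i hi ↦ hS_le.trans ?_⟩
  simpa only [hx_eq, mul_one] using prod_le_mul_fClique hx hS hi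

lemma exists_forall_le_of_mem_cliqueLevelSet (hs : s ≠ 0) {δ : ℝ} (hδ : 0 < δ) :
    ∃ R, ∀ x ∈ cliqueLevelSet G s, δ ≤ fClique G (s + 1) x → ∀ v, x v ≤ R := by
  obtain ⟨r, rfl⟩ := Nat.exists_eq_succ_of_ne_zero hs
  set ε := δ / #(G.cliqueFinset (r + 1 + 1))
  refine ⟨1 / ε ^ r, fun x ⟨hx, hx_eq, hclique⟩ hle v ↦ ?_⟩
  obtain ⟨S, hS, hS_le⟩ := exists_clique_forall_le_of_le_fClique_succ hx hx_eq hδ hle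
  have hε : 0 < ε := div_pos hδ (Nat.cast_pos.2 (card_pos.2 ⟨S, hS⟩))
  have hcard : r + 1 ≤ #S :=
    (SimpleGraph.mem_cliqueFinset_iff.1 hS).card_eq ▸ Nat.le_succ _
  rw [le_div_iff₀ (pow_pos hε r), ← hx_eq]
  exact mul_pow_le_fClique_succ hx hclique hε hcard hS_le

lemma isCompact_cliqueLevelSet_inter_le_fClique (hs : s ≠ 0) {δ : ℝ} (hδ : 0 < δ) :
    IsCompact (cliqueLevelSet G s ∩ {x | δ ≤ fClique G (s + 1) x}) := by
  obtain ⟨R, hR⟩ := exists_forall_le_of_mem_cliqueLevelSet (G := G) hs hδ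
  refine (isCompact_Icc (a := 0) (b := fun _ ↦ R)).of_isClosed_subset ?_
    fun x ⟨hx, hle⟩ ↦ ⟨hx.1, hR x hx hle⟩
  exact isClosed_cliqueLevelSet.inter (isClosed_le continuous_const continuous_fClique)

lemma exists_isMaxOn_cliqueLevelSet (hs : s ≠ 0) (hsw : s < G.cliqueNum) :
    ∃ y ∈ cliqueLevelSet G s, IsMaxOn (fClique G (s + 1)) (cliqueLevelSet G s) y := by
  obtain ⟨x₀, hx₀, hpos⟩ := exists_mem_cliqueLevelSet_fClique_succ_pos hs hsw
  obtain ⟨y, ⟨hy, hx₀y⟩, hmax⟩ :=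
    (isCompact_cliqueLevelSet_inter_le_fClique hs hpos).exists_isMaxOn
      ⟨x₀, hx₀, le_refl (fClique G (s + 1) x₀)⟩ (continuous_fClique (G := G)).continuousOn
  refine ⟨y, hy, fun x hx ↦ ?_⟩
  obtain hle | hlt := le_or_gt (fClique G (s + 1) x₀) (fClique G (s + 1) x)
  · exact hmax ⟨hx, hle⟩
  · exact hlt.le.trans hx₀y

end

/-- For `1 ≤ s < ω(G)` there is a maximizer `y` of `f_{s+1}(G,·)` on
`S_s(G) = {x : x ≥ 0, f_s(G,x) = 1}` whose support induces a complete subgraph of `G`. -/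
theorem exists_max_with_clique_support {n : ℕ} (G : SimpleGraph (Fin n))
    [DecidableRel G.Adj] (s : ℕ) (hs : 1 ≤ s) (hsw : s < G.cliqueNum) :
    ∃ y : Fin n → ℝ, (∀ i, 0 ≤ y i) ∧ fClique G s y = 1 ∧
      (∀ x : Fin n → ℝ, (∀ i, 0 ≤ x i) → fClique G s x = 1 →
        fClique G (s + 1) x ≤ fClique G (s + 1) y) ∧
      G.IsClique {v : Fin n | 0 < y v} := by
  have hs : s ≠ 0 := Nat.one_le_iff_ne_zero.1 hs
  obtain ⟨y, ⟨hy, hy_eq, hclique⟩, hmax⟩ := exists_isMaxOn_cliqueLevelSet hs hsw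
  refine ⟨y, hy, hy_eq, fun x hx hx_eq ↦ ?_, hclique.subset fun v hv ↦ hv.ne'⟩
  obtain ⟨z, hzx, hz_clique⟩ := exists_cliqueDominates_isClique_support (G := G) hs hx
  exact hzx.fClique_succ_le.trans (hmax ⟨hzx.nonneg, hzx.fClique_eq.trans hx_eq, hz_clique⟩)
end

section
/- Let G be a simple graph on vertex set [n] with clique number ω and let 1 ≤ s < ω. Then the maximum of f_{s+1}(G,x) over all x ∈ ℝ^n with x ≥ 0 and f_s(G,x) = 1 equals C(ω,s+1)·C(ω,s)^{-(s+1)/s}; it is attained by the vector taking the common value t on the vertices of some ω-clique of G and 0 elsewhere, where t > 0 is chosen so that C(ω,s)·t^s = 1, i.e., t = C(ω,s)^{-1/s}. -/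
open Finset

/-!
If `u` and `v` are non-adjacent, no clique contains both, so every clique polynomial is affine in
`(x u, x v)`. Moving `(x u, x v)` along the line on which `f_s` is constant, in the direction in
which `f_{s+1}` does not decrease, until one coordinate vanishes, shrinks the support of `x`.
Iterating, `x` may be assumed to be supported on a clique, where `f_s` and `f_{s+1}` are elementary
symmetric polynomials in at most `ω` nonnegative numbers. Maclaurin's inequality then compares
them; it follows from Newton's inequalities, which are proved by adjoining one number at a time.
-/

section LogConcave

variable {K : Type*} [CommRing K] [LinearOrder K] [IsStrictOrderedRing K] {p : ℕ → K}

/-- A nonnegative log-concave sequence whose zeros form a final segment, so that its nonzero terms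
are consecutive; the last condition makes log-concavity imply `p i * p l ≤ p j * p k` for
`i ≤ j ≤ k ≤ l` with `i + l = j + k`. -/
structure IsLogConcaveSeq (p : ℕ → K) : Prop where
  nonneg : ∀ k, 0 ≤ p k
  mul_le_sq : ∀ k, p k * p (k + 2) ≤ p (k + 1) ^ 2
  succ_eq_zero : ∀ k, p k = 0 → p (k + 1) = 0

lemma IsLogConcaveSeq.mul_add_three_le (hp : IsLogConcaveSeq p) (k : ℕ) :
    p k * p (k + 3) ≤ p (k + 1) * p (k + 2) := by
  rcases (hp.nonneg (k + 2)).eq_or_lt with h2 | h2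
  · simp [hp.succ_eq_zero (k + 2) h2.symm, ← h2]
  have h1 : 0 < p (k + 1) :=
    (hp.nonneg _).lt_of_ne fun h => h2.ne' (hp.succ_eq_zero (k + 1) h.symm)
  refine le_of_mul_le_mul_left ?_ (mul_pos h1 h2)
  calc p (k + 1) * p (k + 2) * (p k * p (k + 3))
      = p k * p (k + 2) * (p (k + 1) * p (k + 3)) := by ring
    _ ≤ p (k + 1) ^ 2 * p (k + 2) ^ 2 :=
        mul_le_mul (hp.mul_le_sq k) (hp.mul_le_sq (k + 1))
          (mul_nonneg (hp.nonneg _) (hp.nonneg _)) (sq_nonneg _)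
    _ = p (k + 1) * p (k + 2) * (p (k + 1) * p (k + 2)) := by ring

lemma IsLogConcaveSeq.succ_pow_le_pow_succ (hp : IsLogConcaveSeq p) (h0 : p 0 = 1) (k : ℕ) :
    p (k + 1) ^ k ≤ p k ^ (k + 1) := by
  induction k with
  | zero => simp [h0]
  | succ k ih =>
    rcases (hp.nonneg (k + 1)).eq_or_lt with h1 | h1
    · simp [hp.succ_eq_zero (k + 1) h1.symm, ← h1]
    refine le_of_mul_le_mul_left ?_ (pow_pos h1 k)
    calc p (k + 1) ^ k * p (k + 2) ^ (k + 1)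
        ≤ p k ^ (k + 1) * p (k + 2) ^ (k + 1) :=
          mul_le_mul_of_nonneg_right ih (pow_nonneg (hp.nonneg _) _)
      _ = (p k * p (k + 2)) ^ (k + 1) := (mul_pow _ _ _).symm
      _ ≤ (p (k + 1) ^ 2) ^ (k + 1) :=
          pow_le_pow_left₀ (mul_nonneg (hp.nonneg _) (hp.nonneg _)) (hp.mul_le_sq k) _
      _ = p (k + 1) ^ k * p (k + 1) ^ (k + 2) := by ring

lemma mul_le_sq_of_log_concave {a b c d t j m : K} (hj : 1 ≤ j) (hm : 1 ≤ m) (ht : 0 ≤ t)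
    (hac : a * c ≤ b ^ 2) (hbd : b * d ≤ c ^ 2) (had : a * d ≤ b * c) :
    ((m + 1) * b + (j - 1) * (t * a)) * ((m - 1) * d + (j + 1) * (t * c))
      ≤ (m * c + j * (t * b)) ^ 2 := by
  have hcc : 0 ≤ (m ^ 2 - 1) * (c ^ 2 - b * d) :=
    mul_nonneg (by nlinarith) (by linarith)
  have hbb : 0 ≤ t ^ 2 * ((j ^ 2 - 1) * (b ^ 2 - a * c)) :=
    mul_nonneg (sq_nonneg t) (mul_nonneg (by nlinarith) (by linarith))
  have hbc : 0 ≤ t * ((j - 1) * (m - 1) * (b * c - a * d)) :=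
    mul_nonneg ht (mul_nonneg (mul_nonneg (by linarith) (by linarith)) (by linarith))
  linear_combination hcc + hbb + hbc + sq_nonneg (c - t * b)

lemma IsLogConcaveSeq.mul_le_sq_of_recursion (hp : IsLogConcaveSeq p) {q : ℕ → K} {t N : K}
    (ht : 0 ≤ t)
    (hq : ∀ k : ℕ, (N + 1) * q k = (N + 1 - k) * p k + k * (t * p (k - 1)))
    {k : ℕ} (hk : k + 1 ≤ N) : q k * q (k + 2) ≤ q (k + 1) ^ 2 := by
  -- For `k = 0` the coefficient of `p (k - 1)` vanishes, and `0` may stand in for the missing term.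
  obtain ⟨a, ha, hac, had⟩ : ∃ a, k * (t * p (k - 1)) = k * (t * a) ∧
      a * p (k + 1) ≤ p k ^ 2 ∧ a * p (k + 2) ≤ p k * p (k + 1) := by
    cases k with
    | zero => exact ⟨0, by simp, by simp [sq_nonneg], by simp [hp.nonneg, mul_nonneg]⟩
    | succ k => exact ⟨p k, rfl, hp.mul_le_sq k, hp.mul_add_three_le k⟩
  have hq0 : (N + 1) * q k = (N - k + 1) * p k + (k + 1 - 1) * (t * a) := by
    rw [hq, ha]
    ring
  have hq1 : (N + 1) * q (k + 1) = (N - k) * p (k + 1) + (k + 1) * (t * p k) := by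
    rw [hq, Nat.add_sub_cancel]
    push_cast
    ring
  have hq2 : (N + 1) * q (k + 2) = (N - k - 1) * p (k + 2) + (k + 1 + 1) * (t * p (k + 1)) := by
    rw [hq, Nat.add_succ_sub_one]
    push_cast
    ring
  have hN : 0 < N + 1 := by linarith [Nat.cast_nonneg (α := K) k]
  refine le_of_mul_le_mul_left ?_ (pow_pos hN 2)
  calc (N + 1) ^ 2 * (q k * q (k + 2)) = (N + 1) * q k * ((N + 1) * q (k + 2)) := by ring
    _ ≤ ((N + 1) * q (k + 1)) ^ 2 := by
        rw [hq0, hq1, hq2]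
        exact mul_le_sq_of_log_concave (by simp) (by linarith) ht hac (hp.mul_le_sq k) had
    _ = (N + 1) ^ 2 * q (k + 1) ^ 2 := mul_pow _ _ _

end LogConcave

section ElementarySymmetric

lemma esymm_cons_succ {R : Type*} [CommSemiring R] (m : Multiset R) (t : R) (k : ℕ) :
    (t ::ₘ m).esymm (k + 1) = m.esymm (k + 1) + t * m.esymm k := by
  simp [Multiset.esymm, Multiset.powersetCard_cons, Multiset.sum_map_mul_left]

lemma esymm_eq_zero_of_card_lt {R : Type*} [CommSemiring R] {m : Multiset R} {k : ℕ}
    (hk : m.card < k) : m.esymm k = 0 := by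
  simp [Multiset.esymm, Multiset.powersetCard_eq_empty _ hk]

lemma esymm_add_replicate_zero {R : Type*} [CommSemiring R] (m : Multiset R) (j k : ℕ) :
    (m + Multiset.replicate j 0).esymm k = m.esymm k := by
  induction j with
  | zero => simp
  | succ j ih =>
    rw [Multiset.replicate_succ, Multiset.add_cons]
    cases k with
    | zero => simp [Multiset.esymm]
    | succ k => rw [esymm_cons_succ, ih, zero_mul, add_zero]

lemma esymm_nonneg {R : Type*} [CommSemiring R] [PartialOrder R] [IsOrderedRing R]
    {m : Multiset R} (hm : ∀ t ∈ m, 0 ≤ t) (k : ℕ) : 0 ≤ m.esymm k := by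
  refine Multiset.sum_nonneg fun y hy => ?_
  obtain ⟨w, hw, rfl⟩ := Multiset.mem_map.1 hy
  exact Multiset.prod_nonneg fun a ha =>
    hm a (Multiset.mem_of_le (Multiset.mem_powersetCard.1 hw).1 ha)

lemma esymm_succ_eq_zero {R : Type*} [CommSemiring R] [Nontrivial R] [PartialOrder R]
    [IsOrderedRing R] {m : Multiset R} (hm : ∀ t ∈ m, 0 ≤ t) {k : ℕ} (h : m.esymm k = 0) :
    m.esymm (k + 1) = 0 := by
  induction m using Multiset.induction_on generalizing k with
  | empty => exact esymm_eq_zero_of_card_lt (by simp)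
  | cons t m ih =>
    obtain ⟨ht, hm⟩ := Multiset.forall_mem_cons.1 hm
    cases k with
    | zero => simp [Multiset.esymm] at h
    | succ k =>
      rw [esymm_cons_succ, add_eq_zero_iff_of_nonneg (esymm_nonneg hm _)
        (mul_nonneg ht (esymm_nonneg hm _))] at h
      rw [esymm_cons_succ, ih hm h.1, h.1, mul_zero, add_zero]

variable {K : Type*} [Field K] {m : Multiset K}

/-- The `k`-th elementary symmetric mean of `m`: the average of the products of the `k`-element
subfamilies of `m`. It is `0` for `k > m.card`. -/
def esymmMean (m : Multiset K) (k : ℕ) : K := m.esymm k / m.card.choose k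

lemma esymmMean_zero (m : Multiset K) : esymmMean m 0 = 1 := by
  simp [esymmMean, Multiset.esymm]

lemma choose_mul_esymmMean [CharZero K] (m : Multiset K) (k : ℕ) :
    m.card.choose k * esymmMean m k = m.esymm k := by
  rcases lt_or_ge m.card k with hk | hk
  · simp [esymm_eq_zero_of_card_lt hk, Nat.choose_eq_zero_of_lt hk]
  · exact mul_div_cancel₀ _ (by exact_mod_cast (Nat.choose_pos hk).ne')

lemma esymmMean_eq_zero_of_card_lt {k : ℕ} (hk : m.card < k) : esymmMean m k = 0 := by
  simp [esymmMean, esymm_eq_zero_of_card_lt hk]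

/-- The truncated index `k - 1` is harmless: at `k = 0` its coefficient vanishes. -/
lemma card_add_one_mul_esymmMean_cons [CharZero K] (m : Multiset K) (t : K) (k : ℕ) :
    (m.card + 1) * esymmMean (t ::ₘ m) k
      = (m.card + 1 - k) * esymmMean m k + k * (t * esymmMean m (k - 1)) := by
  cases k with
  | zero => simp [esymmMean_zero]
  | succ k =>
    rcases lt_or_ge m.card k with hk | hk
    · simp [esymmMean_eq_zero_of_card_lt, hk, hk.trans (Nat.lt_succ_self k)]
    have hchoose : ((m.card + 1).choose (k + 1) : K) ≠ 0 := by
      exact_mod_cast (Nat.choose_pos (by omega)).ne'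
    have hsum : ((m.card + 1).choose (k + 1) : K) * esymmMean (t ::ₘ m) (k + 1)
        = m.card.choose (k + 1) * esymmMean m (k + 1)
          + t * (m.card.choose k * esymmMean m k) := by
      simpa only [choose_mul_esymmMean, Multiset.card_cons, esymm_cons_succ]
        using choose_mul_esymmMean (t ::ₘ m) (k + 1)
    have habsorb : ((m.card : K) + 1) * m.card.choose k
        = (m.card + 1).choose (k + 1) * (k + 1) := by
      exact_mod_cast Nat.add_one_mul_choose_eq m.card k
    have hpascal : ((m.card + 1).choose (k + 1) : K)
        = m.card.choose k + m.card.choose (k + 1) := by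
      exact_mod_cast Nat.choose_succ_succ m.card k
    refine mul_left_cancel₀ hchoose ?_
    push_cast [Nat.add_sub_cancel]
    linear_combination (m.card + 1 : K) * hsum
      + (t * esymmMean m k - esymmMean m (k + 1)) * habsorb
      - (m.card + 1 : K) * esymmMean m (k + 1) * hpascal

variable [LinearOrder K] [IsStrictOrderedRing K]

lemma esymmMean_nonneg (hm : ∀ t ∈ m, 0 ≤ t) (k : ℕ) : 0 ≤ esymmMean m k :=
  div_nonneg (esymm_nonneg hm k) (Nat.cast_nonneg _)

lemma esymmMean_succ_eq_zero (hm : ∀ t ∈ m, 0 ≤ t) {k : ℕ} (h : esymmMean m k = 0) :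
    esymmMean m (k + 1) = 0 := by
  have : m.esymm k = 0 := by rw [← choose_mul_esymmMean, h, mul_zero]
  rw [esymmMean, esymm_succ_eq_zero hm this, zero_div]

theorem esymmMean_mul_le_sq (hm : ∀ t ∈ m, 0 ≤ t) (k : ℕ) :
    esymmMean m k * esymmMean m (k + 2) ≤ esymmMean m (k + 1) ^ 2 := by
  induction m using Multiset.induction_on generalizing k with
  | empty =>
    rw [esymmMean_eq_zero_of_card_lt (k := k + 2) (by simp), mul_zero]
    exact sq_nonneg _
  | cons t m ih =>
    obtain ⟨ht, hm⟩ := Multiset.forall_mem_cons.1 hm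
    rcases lt_or_ge m.card (k + 1) with hk | hk
    · rw [esymmMean_eq_zero_of_card_lt (k := k + 2) (by simpa using hk), mul_zero]
      exact sq_nonneg _
    have hlc : IsLogConcaveSeq (esymmMean m) :=
      ⟨esymmMean_nonneg hm, ih hm, fun _ => esymmMean_succ_eq_zero hm⟩
    exact hlc.mul_le_sq_of_recursion ht (card_add_one_mul_esymmMean_cons m t)
      (by exact_mod_cast hk)

theorem isLogConcaveSeq_esymmMean (hm : ∀ t ∈ m, 0 ≤ t) : IsLogConcaveSeq (esymmMean m) :=
  ⟨esymmMean_nonneg hm, esymmMean_mul_le_sq hm, fun _ => esymmMean_succ_eq_zero hm⟩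

theorem choose_pow_mul_esymm_pow_le (hm : ∀ t ∈ m, 0 ≤ t) {n : ℕ} (hn : m.card ≤ n) (k : ℕ) :
    (n.choose k : K) ^ (k + 1) * m.esymm (k + 1) ^ k
      ≤ (n.choose (k + 1) : K) ^ k * m.esymm k ^ (k + 1) := by
  set m₀ := m + Multiset.replicate (n - m.card) 0 with hm₀
  have hcard : m₀.card = n := by simp [hm₀, hn]
  have hnonneg : ∀ t ∈ m₀, 0 ≤ t := by
    intro t ht
    rcases Multiset.mem_add.1 ht with h | h
    · exact hm t h
    · exact (Multiset.eq_of_mem_replicate h).ge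
  have hesymm (j : ℕ) : m.esymm j = n.choose j * esymmMean m₀ j := by
    rw [← hcard, choose_mul_esymmMean, hm₀, esymm_add_replicate_zero]
  have hmean : esymmMean m₀ (k + 1) ^ k ≤ esymmMean m₀ k ^ (k + 1) :=
    (isLogConcaveSeq_esymmMean hnonneg).succ_pow_le_pow_succ (esymmMean_zero m₀) k
  rw [hesymm, hesymm, mul_pow, mul_pow, mul_left_comm]
  gcongr

end ElementarySymmetric

lemma exists_boundary_point_eq_and_le {K : Type*} [Field K] [LinearOrder K]
    [IsStrictOrderedRing K] {p q p' q' c d : K} (hp : 0 ≤ p) (hq : 0 ≤ q) (hc : 0 ≤ c) (hd : 0 ≤ d)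
    (hpp' : p = 0 → p' = 0) (hqq' : q = 0 → q' = 0) :
    ∃ a b : K, 0 ≤ a ∧ 0 ≤ b ∧ (a = 0 ∨ b = 0) ∧ a * p + b * q = c * p + d * q ∧
      c * p' + d * q' ≤ a * p' + b * q' := by
  wlog hle : q' * p ≤ p' * q generalizing p q p' q' c d
  · obtain ⟨b, a, hb, ha, hba, heq, hge⟩ :=
      this hq hp hd hc hqq' hpp' (by linarith)
    exact ⟨a, b, ha, hb, hba.symm, by linarith, by linarith⟩
  rcases hp.eq_or_lt with hp | hp
  · exact ⟨0, d, le_rfl, hd, .inl rfl, by simp [← hp], by simp [hpp' hp.symm]⟩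
  refine ⟨c + d * (q / p), 0, by positivity, le_rfl, .inr rfl, by field_simp; simp, ?_⟩
  have hq' : q' ≤ q / p * p' := by rwa [div_mul_eq_mul_div, le_div_iff₀ hp, mul_comm q]
  linear_combination d * hq'

section CliqueSum

variable {V K : Type*} [Fintype V] [DecidableEq V] (G : SimpleGraph V) [DecidableRel G.Adj]

/-- The clique polynomial `f_s(G,x)` over an arbitrary finite vertex set and commutative semiring;
`fClique` is the case of vertex set `Fin n` and real coefficients. -/
def cliqueSum [CommSemiring K] (s : ℕ) (x : V → K) : K :=
  ∑ S ∈ G.cliqueFinset s, ∏ i ∈ S, x i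

/-- The partial derivative of `cliqueSum G s` with respect to the coordinate `u`, evaluated
at `x`. -/
def cliqueSumPartial [CommSemiring K] (s : ℕ) (x : V → K) (u : V) : K :=
  ∑ S ∈ G.cliqueFinset s with u ∈ S, ∏ i ∈ S.erase u, x i

variable {G}

lemma cliqueSum_update [CommRing K] (s : ℕ) (x : V → K) (u : V) (a : K) :
    cliqueSum G s (Function.update x u a)
      = cliqueSum G s x + (a - x u) * cliqueSumPartial G s x u := by
  rw [cliqueSum, cliqueSum, cliqueSumPartial, mul_sum, sum_filter, ← sum_add_distrib]
  refine sum_congr rfl fun S _ => ?_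
  by_cases hu : u ∈ S
  · rw [prod_update_of_mem hu, sdiff_singleton_eq_erase, if_pos hu, ← mul_prod_erase S x hu]
    ring
  · rw [prod_update_of_notMem hu, if_neg hu, add_zero]

lemma cliqueSumPartial_update_of_not_adj [CommSemiring K] (s : ℕ) (x : V → K) {u v : V}
    (huv : ¬G.Adj u v) (a : K) :
    cliqueSumPartial G s (Function.update x v a) u = cliqueSumPartial G s x u := by
  refine sum_congr rfl fun S hS => prod_update_of_notMem (fun hv => huv ?_) x a
  obtain ⟨hS, hu⟩ := mem_filter.1 hS
  obtain ⟨hvu, hv⟩ := mem_erase.1 hv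
  exact (SimpleGraph.mem_cliqueFinset_iff.1 hS).isClique hu hv hvu.symm

lemma cliqueSum_update_update_of_not_adj [CommRing K] (s : ℕ) (x : V → K) {u v : V} (hne : u ≠ v)
    (huv : ¬G.Adj u v) (a b : K) :
    cliqueSum G s (Function.update (Function.update x u a) v b)
      = cliqueSum G s x + (a - x u) * cliqueSumPartial G s x u
        + (b - x v) * cliqueSumPartial G s x v := by
  rw [cliqueSum_update, cliqueSum_update, Function.update_of_ne hne.symm,
    cliqueSumPartial_update_of_not_adj s x (mt SimpleGraph.Adj.symm huv)]

lemma cliqueSum_eq_esymm [CommSemiring K] (s : ℕ) {x : V → K} {C : Finset V} (hC : G.IsClique C)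
    (hx : ∀ i ∉ C, x i = 0) : cliqueSum G s x = (C.val.map x).esymm s := by
  rw [esymm_map_val]
  symm
  refine sum_subset (fun S hS => ?_) fun S hS hSC => ?_
  · obtain ⟨hSC, hcard⟩ := mem_powersetCard.1 hS
    exact SimpleGraph.mem_cliqueFinset_iff.2 ⟨hC.subset (coe_subset.2 hSC), hcard⟩
  · have hcard := (SimpleGraph.mem_cliqueFinset_iff.1 hS).card_eq
    obtain ⟨i, hi, hiC⟩ := not_subset.1 fun h => hSC (mem_powersetCard.2 ⟨h, hcard⟩)
    exact prod_eq_zero hi (hx i hiC)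

lemma cliqueSum_indicator [CommSemiring K] (s : ℕ) (t : K) {C : Finset V} (hC : G.IsClique C) :
    cliqueSum G s (fun v => if v ∈ C then t else 0) = C.card.choose s * t ^ s := by
  rw [cliqueSum_eq_esymm s hC fun i hi => if_neg hi, esymm_map_val, ← card_powersetCard,
    ← nsmul_eq_mul]
  refine sum_eq_card_nsmul fun S hS => ?_
  obtain ⟨hSC, hcard⟩ := mem_powersetCard.1 hS
  rw [← hcard]
  exact prod_eq_pow_card fun i hi => if_pos (hSC hi)

section Nonneg

variable [CommSemiring K] [PartialOrder K] [IsOrderedRing K] {s : ℕ} {x : V → K}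

lemma cliqueSum_nonneg (s : ℕ) (hx : ∀ i, 0 ≤ x i) : 0 ≤ cliqueSum G s x :=
  sum_nonneg fun _ _ => prod_nonneg fun i _ => hx i

lemma cliqueSumPartial_nonneg (s : ℕ) (hx : ∀ i, 0 ≤ x i) (u : V) :
    0 ≤ cliqueSumPartial G s x u :=
  sum_nonneg fun _ _ => prod_nonneg fun i _ => hx i

lemma cliqueSumPartial_succ_eq_zero [Nontrivial K] [NoZeroDivisors K] (hs : s ≠ 0)
    (hx : ∀ i, 0 ≤ x i) {u : V} (h : cliqueSumPartial G s x u = 0) :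
    cliqueSumPartial G (s + 1) x u = 0 := by
  rw [cliqueSumPartial, sum_eq_zero_iff_of_nonneg fun _ _ => prod_nonneg fun i _ => hx i] at h
  refine sum_eq_zero fun S hS => ?_
  rw [mem_filter, SimpleGraph.mem_cliqueFinset_iff] at hS
  obtain ⟨hS, hu⟩ := hS
  obtain ⟨w, hw, hwu⟩ := exists_mem_ne (by rw [hS.card_eq]; omega : 1 < S.card) u
  have hprod : ∏ i ∈ (S.erase w).erase u, x i = 0 :=
    h _ (mem_filter.2 ⟨SimpleGraph.mem_cliqueFinset_iff.2 (hS.erase_of_mem hw),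
      mem_erase.2 ⟨hwu.symm, hu⟩⟩)
  obtain ⟨i, hi, hxi⟩ := prod_eq_zero_iff.1 hprod
  exact prod_eq_zero (erase_subset_erase u (erase_subset w S) hi) hxi

end Nonneg

variable [Field K] [LinearOrder K] [IsStrictOrderedRing K] {s : ℕ} {x : V → K}

lemma exists_support_ssubset_of_not_isClique (hs : s ≠ 0) (hx : ∀ i, 0 ≤ x i)
    (hclique : ¬G.IsClique (Function.support x)) :
    ∃ y : V → K, (∀ i, 0 ≤ y i) ∧ Function.support y ⊂ Function.support x ∧
      cliqueSum G s y = cliqueSum G s x ∧ cliqueSum G (s + 1) x ≤ cliqueSum G (s + 1) y := by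
  obtain ⟨u, hu, v, hv, hne, huv⟩ : ∃ u, x u ≠ 0 ∧ ∃ v, x v ≠ 0 ∧ u ≠ v ∧ ¬G.Adj u v := by
    simpa [SimpleGraph.isClique_iff, Set.Pairwise] using hclique
  obtain ⟨a, b, ha, hb, hab, heq, hle⟩ := exists_boundary_point_eq_and_le
    (cliqueSumPartial_nonneg s hx u) (cliqueSumPartial_nonneg s hx v) (hx u) (hx v)
    (cliqueSumPartial_succ_eq_zero (G := G) hs hx)
    (cliqueSumPartial_succ_eq_zero (G := G) hs hx)
  refine ⟨Function.update (Function.update x u a) v b, fun i => ?_, ?_, ?_, ?_⟩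
  · simp only [Function.update_apply]
    split_ifs
    exacts [hb, ha, hx i]
  · rw [Set.ssubset_iff_of_subset]
    · rcases hab with rfl | rfl
      · exact ⟨u, hu, by simp [hne]⟩
      · exact ⟨v, hv, by simp⟩
    · intro i hi
      rcases eq_or_ne i v with rfl | hiv
      · exact hv
      rcases eq_or_ne i u with rfl | hiu
      · exact hu
      simpa [hiv, hiu] using hi
  · rw [cliqueSum_update_update_of_not_adj s x hne huv]
    linear_combination heq
  · rw [cliqueSum_update_update_of_not_adj (s + 1) x hne huv]
    linear_combination hle

lemma exists_isClique_support (hs : s ≠ 0) (hx : ∀ i, 0 ≤ x i) :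
    ∃ y : V → K, (∀ i, 0 ≤ y i) ∧ G.IsClique (Function.support y) ∧
      cliqueSum G s y = cliqueSum G s x ∧ cliqueSum G (s + 1) x ≤ cliqueSum G (s + 1) y := by
  induction hsupp : Function.support x using WellFoundedLT.induction generalizing x with
  | ind A ih =>
    subst hsupp
    by_cases hclique : G.IsClique (Function.support x)
    · exact ⟨x, hx, hclique, rfl, le_rfl⟩
    obtain ⟨y, hy, hyx, hys, hys'⟩ := exists_support_ssubset_of_not_isClique hs hx hclique
    obtain ⟨z, hz, hzclique, hzs, hzs'⟩ := ih _ hyx hy rfl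
    exact ⟨z, hz, hzclique, hzs.trans hys, hys'.trans hzs'⟩

theorem choose_pow_mul_cliqueSum_pow_le (hs : s ≠ 0) (hx : ∀ i, 0 ≤ x i) :
    (G.cliqueNum.choose s : K) ^ (s + 1) * cliqueSum G (s + 1) x ^ s
      ≤ (G.cliqueNum.choose (s + 1) : K) ^ s * cliqueSum G s x ^ (s + 1) := by
  obtain ⟨y, hy, hclique, hys, hys'⟩ := exists_isClique_support (G := G) hs hx
  set C : Finset V := {i | y i ≠ 0} with hC
  replace hclique : G.IsClique C := by simpa [hC, Function.support] using hclique
  have hesymm (r : ℕ) : cliqueSum G r y = (C.val.map y).esymm r :=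
    cliqueSum_eq_esymm r hclique fun i hi => by simpa [hC] using hi
  calc (G.cliqueNum.choose s : K) ^ (s + 1) * cliqueSum G (s + 1) x ^ s
      ≤ (G.cliqueNum.choose s : K) ^ (s + 1) * cliqueSum G (s + 1) y ^ s := by
        gcongr
        exact cliqueSum_nonneg _ hx
    _ ≤ (G.cliqueNum.choose (s + 1) : K) ^ s * cliqueSum G s y ^ (s + 1) := by
        rw [hesymm, hesymm]
        refine choose_pow_mul_esymm_pow_le (by simpa using fun i _ => hy i) ?_ s
        simpa using SimpleGraph.IsClique.card_le_cliqueNum (tc := hclique)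
    _ = (G.cliqueNum.choose (s + 1) : K) ^ s * cliqueSum G s x ^ (s + 1) := by rw [hys]

theorem cliqueSum_succ_le (hs : s ≠ 0) (hsω : s ≤ G.cliqueNum) (hx : ∀ i, 0 ≤ x i) {t : K}
    (ht : 0 ≤ t) (h : cliqueSum G s x ≤ G.cliqueNum.choose s * t ^ s) :
    cliqueSum G (s + 1) x ≤ G.cliqueNum.choose (s + 1) * t ^ (s + 1) := by
  have hchoose : (0 : K) < G.cliqueNum.choose s := by exact_mod_cast Nat.choose_pos hsω
  refine le_of_pow_le_pow_left₀ hs (by positivity)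
    (le_of_mul_le_mul_left ?_ (pow_pos hchoose (s + 1)))
  calc (G.cliqueNum.choose s : K) ^ (s + 1) * cliqueSum G (s + 1) x ^ s
      ≤ (G.cliqueNum.choose (s + 1) : K) ^ s * cliqueSum G s x ^ (s + 1) :=
        choose_pow_mul_cliqueSum_pow_le hs hx
    _ ≤ (G.cliqueNum.choose (s + 1) : K) ^ s * (G.cliqueNum.choose s * t ^ s) ^ (s + 1) := by
        gcongr
        exact cliqueSum_nonneg s hx
    _ = (G.cliqueNum.choose s : K) ^ (s + 1) * (G.cliqueNum.choose (s + 1) * t ^ (s + 1)) ^ s := by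
        ring

end CliqueSum

lemma rpow_neg_one_div_pow {c : ℝ} (hc : 0 ≤ c) (s r : ℕ) :
    (c ^ (-(1 : ℝ) / s)) ^ r = c ^ (-((r : ℝ) / s)) := by
  rw [← Real.rpow_mul_natCast hc]
  congr 1
  ring

theorem max_fClique_succ_general {V : Type*} [Fintype V] [DecidableEq V] (G : SimpleGraph V)
    [DecidableRel G.Adj] (s : ℕ) (hs : 1 ≤ s) (hsω : s ≤ G.cliqueNum) :
    (∀ x : V → ℝ, (∀ i, 0 ≤ x i) → cliqueSum G s x = 1 →
        cliqueSum G (s + 1) x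
          ≤ (G.cliqueNum.choose (s + 1) : ℝ)
              * (G.cliqueNum.choose s : ℝ) ^ (-(((s : ℝ) + 1) / (s : ℝ)))) ∧
    ∃ S : Finset V, G.IsNClique G.cliqueNum S ∧
      cliqueSum G s
          (fun v => if v ∈ S then (G.cliqueNum.choose s : ℝ) ^ (-(1 : ℝ) / (s : ℝ)) else 0)
        = 1 ∧
      cliqueSum G (s + 1)
          (fun v => if v ∈ S then (G.cliqueNum.choose s : ℝ) ^ (-(1 : ℝ) / (s : ℝ)) else 0)
        = (G.cliqueNum.choose (s + 1) : ℝ)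
            * (G.cliqueNum.choose s : ℝ) ^ (-(((s : ℝ) + 1) / (s : ℝ))) := by
  have hs0 : s ≠ 0 := Nat.one_le_iff_ne_zero.1 hs
  have hchoose : (0 : ℝ) < G.cliqueNum.choose s := by exact_mod_cast Nat.choose_pos hsω
  set t : ℝ := (G.cliqueNum.choose s : ℝ) ^ (-(1 : ℝ) / (s : ℝ)) with ht
  have hts : (G.cliqueNum.choose s : ℝ) * t ^ s = 1 := by
    rw [ht, rpow_neg_one_div_pow hchoose.le, div_self (Nat.cast_ne_zero.2 hs0),
      Real.rpow_neg_one, mul_inv_cancel₀ hchoose.ne']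
  rw [← Nat.cast_succ, ← rpow_neg_one_div_pow hchoose.le, ← ht]
  refine ⟨fun x hx h => cliqueSum_succ_le hs0 hsω hx (by positivity) (h.trans hts.symm).le, ?_⟩
  obtain ⟨S, hS⟩ := G.exists_isNClique_cliqueNum
  have hvalue (r : ℕ) := cliqueSum_indicator r t hS.isClique
  rw [hS.card_eq] at hvalue
  exact ⟨S, hS, (hvalue s).trans hts, hvalue (s + 1)⟩

/-- For `1 ≤ s < ω`, the maximum of `f_{s+1}(G,x)` subject to `x ≥ 0`, `f_s(G,x) = 1`
equals `C(ω,s+1)·C(ω,s)^{-(s+1)/s}`, attained by the vector taking the value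
`C(ω,s)^{-1/s}` on the vertices of some `ω`-clique of `G` and `0` elsewhere. -/
theorem max_fClique_succ {n : ℕ} (G : SimpleGraph (Fin n)) [DecidableRel G.Adj]
    (s : ℕ) (hs : 1 ≤ s) (hsw : s < G.cliqueNum) :
    (∀ x : Fin n → ℝ, (∀ i, 0 ≤ x i) → fClique G s x = 1 →
        fClique G (s + 1) x
          ≤ (G.cliqueNum.choose (s + 1) : ℝ)
              * (G.cliqueNum.choose s : ℝ) ^ (-(((s : ℝ) + 1) / (s : ℝ)))) ∧
    ∃ S : Finset (Fin n), G.IsNClique G.cliqueNum S ∧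
      fClique G s
          (fun v => if v ∈ S then (G.cliqueNum.choose s : ℝ) ^ (-(1 : ℝ) / (s : ℝ)) else 0)
        = 1 ∧
      fClique G (s + 1)
          (fun v => if v ∈ S then (G.cliqueNum.choose s : ℝ) ^ (-(1 : ℝ) / (s : ℝ)) else 0)
        = (G.cliqueNum.choose (s + 1) : ℝ)
            * (G.cliqueNum.choose s : ℝ) ^ (-(((s : ℝ) + 1) / (s : ℝ))) :=
  max_fClique_succ_general G s hs hsw.le
end

section
/- Let G be a simple graph on vertex set [n] with clique number ω ≥ 2. Then the maximum of Σ_{{i,j} ∈ E(G)} x_i x_j over the standard simplex {x ∈ ℝ^n : x ≥ 0, x_1 + ··· + x_n = 1} equals (1 − 1/ω)/2. -/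
open Finset

/-!
Twice the edge sum is the quadratic form `x ⬝ᵥ A *ᵥ x` of the adjacency matrix `A`. If `u` and `v`
are not adjacent, then the form is affine along the direction `e_u - e_v`, so moving the whole
weight of one of the two vertices onto the other does not decrease it. A point whose support is
minimal among those at which the form is at least its value at `x` is therefore supported on a
clique. There the form equals `1 - ∑ i, x i ^ 2`, which by Cauchy–Schwarz is at most `1 - 1 / ω`,
with equality for the uniform weights on a maximum clique.
-/

open Matrix Function

section EdgeSum

variable {V : Type*} [DecidableEq V] {G : SimpleGraph V}

lemma isNClique_two_iff {S : Finset V} : G.IsNClique 2 S ↔ ∃ a b, G.Adj a b ∧ S = {a, b} := by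
  rw [SimpleGraph.isNClique_iff, card_eq_two]
  constructor
  · rintro ⟨hclique, a, b, hab, rfl⟩
    exact ⟨a, b, hclique (by simp) (by simp) hab, rfl⟩
  · rintro ⟨a, b, hadj, rfl⟩
    exact ⟨by simp [hadj], a, b, hadj.ne, rfl⟩

lemma filter_adj_pair_eq [Fintype V] [DecidableRel G.Adj] {a b : V} (hab : G.Adj a b) :
    ({p : V × V | G.Adj p.1 p.2 ∧ ({p.1, p.2} : Finset V) = {a, b}} : Finset (V × V)) =
      {(a, b), (b, a)} := by
  ext ⟨c, d⟩
  have pair_eq_iff : ({c, d} : Finset V) = {a, b} ↔ c = a ∧ d = b ∨ c = b ∧ d = a := by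
    rw [← coe_inj, coe_pair, coe_pair, Set.pair_eq_pair_iff]
  simp only [mem_filter_univ, pair_eq_iff, mem_insert, mem_singleton, Prod.mk.injEq,
    and_iff_right_iff_imp]
  rintro (⟨rfl, rfl⟩ | ⟨rfl, rfl⟩)
  exacts [hab, hab.symm]

lemma two_mul_sum_cliqueFinset_two_prod {R : Type*} [CommSemiring R] [Fintype V] (G : SimpleGraph V)
    [DecidableRel G.Adj] (x : V → R) :
    2 * ∑ S ∈ G.cliqueFinset 2, ∏ i ∈ S, x i = x ⬝ᵥ G.adjMatrix R *ᵥ x := by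
  have maps_to : ∀ p ∈ ({p : V × V | G.Adj p.1 p.2} : Finset (V × V)),
      ({p.1, p.2} : Finset V) ∈ G.cliqueFinset 2 := fun p hp ↦
    G.mem_cliqueFinset_iff.2 (isNClique_two_iff.2 ⟨p.1, p.2, (mem_filter.1 hp).2, rfl⟩)
  rw [G.dotProduct_mulVec_adjMatrix, ← Fintype.sum_prod_type', ← sum_filter,
    ← sum_fiberwise_of_maps_to maps_to, mul_sum]
  refine sum_congr rfl fun S hS ↦ ?_
  obtain ⟨a, b, hab, rfl⟩ := isNClique_two_iff.1 (G.mem_cliqueFinset_iff.1 hS)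
  rw [filter_filter, filter_adj_pair_eq hab, sum_pair (by simp [hab.ne]), prod_pair hab.ne]
  ring

end EdgeSum

section CliqueSupport

variable {V : Type*} [Fintype V]

lemma dotProduct_adjMatrix_mulVec_of_isClique_support {R : Type*} [Ring R] (G : SimpleGraph V)
    [DecidableRel G.Adj] {x : V → R} (hx : G.IsClique (support x)) :
    x ⬝ᵥ G.adjMatrix R *ᵥ x = (∑ i, x i) ^ 2 - x ⬝ᵥ x := by
  classical
  have term_eq (i j : V) :
      (if G.Adj i j then x i * x j else 0) = x i * x j - if i = j then x i * x j else 0 := by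
    by_cases hij : i = j
    · simp [hij]
    by_cases hadj : G.Adj i j
    · simp [hij, hadj]
    have hzero : x i = 0 ∨ x j = 0 := by
      by_contra! h
      exact hadj (hx h.1 h.2 hij)
    rcases hzero with h | h <;> simp [h]
  rw [G.dotProduct_mulVec_adjMatrix]
  simp only [term_eq, sum_sub_distrib, sum_ite_eq, mem_univ, if_true, sq, sum_mul_sum, dotProduct]

lemma sq_sum_le_card_mul_dotProduct_self {R : Type*} [Ring R] [LinearOrder R]
    [IsStrictOrderedRing R] {x : V → R} {s : Finset V} (hs : support x ⊆ s) :
    (∑ i, x i) ^ 2 ≤ #s * (x ⬝ᵥ x) := by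
  have hzero : ∀ i ∉ s, x i = 0 := fun i hi ↦ notMem_support.1 fun h ↦ hi (hs h)
  calc (∑ i, x i) ^ 2 = (∑ i ∈ s, x i) ^ 2 := by
        rw [sum_subset (subset_univ s) fun i _ hi ↦ hzero i hi]
    _ ≤ #s * ∑ i ∈ s, x i ^ 2 := sq_sum_le_card_mul_sum_sq
    _ = #s * (x ⬝ᵥ x) := by
        rw [sum_subset (subset_univ s) fun i _ hi ↦ by simp [hzero i hi]]
        simp only [dotProduct, sq]

lemma dotProduct_self_centroidWeightsIndicator {K : Type*} [DivisionRing K] (s : Finset V) :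
    s.centroidWeightsIndicator K ⬝ᵥ s.centroidWeightsIndicator K = (#s : K)⁻¹ := by
  classical
  have hcancel : (#s : K) * ((#s : K)⁻¹ * (#s : K)⁻¹) = (#s : K)⁻¹ := by
    simpa only [inv_inv, mul_assoc] using inv_mul_mul_self (#s : K)⁻¹
  simp [dotProduct, centroidWeightsIndicator_def, Set.indicator_apply, hcancel]

end CliqueSupport

section MoveWeight

variable {V R : Type*} [DecidableEq V] [Ring R]

/-- The weights obtained from `x` by moving the whole weight of the vertex `v` onto the vertex `u`:
the symmetrization step of the Motzkin–Straus argument. -/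
def moveWeight (x : V → R) (u v : V) : V → R :=
  x + x v • (Pi.single u 1 - Pi.single v 1)

lemma moveWeight_apply_left (x : V → R) {u v : V} (huv : u ≠ v) :
    moveWeight x u v u = x u + x v := by
  simp [moveWeight, huv]

lemma moveWeight_apply_right (x : V → R) {u v : V} (huv : u ≠ v) : moveWeight x u v v = 0 := by
  simp [moveWeight, huv.symm]

lemma moveWeight_apply_of_ne (x : V → R) {u v w : V} (hu : w ≠ u) (hv : w ≠ v) :
    moveWeight x u v w = x w := by
  simp [moveWeight, hu, hv]

lemma support_moveWeight_ssubset {x : V → R} {u v : V} (huv : u ≠ v) (hu : x u ≠ 0)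
    (hv : x v ≠ 0) : support (moveWeight x u v) ⊂ support x := by
  refine (Set.ssubset_iff_of_subset fun w hw ↦ ?_).2
    ⟨v, hv, notMem_support.2 (moveWeight_apply_right x huv)⟩
  by_cases hwu : w = u
  · exact hwu ▸ hu
  by_cases hwv : w = v
  · exact hwv ▸ hv
  rwa [mem_support, moveWeight_apply_of_ne x hwu hwv] at hw

lemma moveWeight_mem_stdSimplex [Fintype V] [PartialOrder R] [IsOrderedAddMonoid R] {x : V → R}
    (hx : x ∈ stdSimplex R V) {u v : V} (huv : u ≠ v) : moveWeight x u v ∈ stdSimplex R V := by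
  refine ⟨fun w ↦ ?_, by simp [moveWeight, sum_add_distrib, ← mul_sum, hx.2]⟩
  by_cases hwu : w = u
  · rw [hwu, moveWeight_apply_left x huv]
    exact add_nonneg (hx.1 u) (hx.1 v)
  by_cases hwv : w = v
  · rw [hwv, moveWeight_apply_right x huv]
  · rw [moveWeight_apply_of_ne x hwu hwv]
    exact hx.1 w

end MoveWeight

section Symmetrization

variable {V : Type*} [Fintype V]

lemma add_dotProduct_mulVec_add_of_isSymm {R : Type*} [CommSemiring R] {A : Matrix V V R}
    (hA : A.IsSymm) (x d : V → R) :
    (x + d) ⬝ᵥ A *ᵥ (x + d) = x ⬝ᵥ A *ᵥ x + 2 * (d ⬝ᵥ A *ᵥ x) + d ⬝ᵥ A *ᵥ d := by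
  have hcross : x ⬝ᵥ A *ᵥ d = d ⬝ᵥ A *ᵥ x := by
    rw [dotProduct_mulVec, dotProduct_comm, ← mulVec_transpose, hA.eq]
  rw [mulVec_add, dotProduct_add, add_dotProduct, add_dotProduct, hcross]
  ring

lemma dotProduct_adjMatrix_mulVec_moveWeight [DecidableEq V] {R : Type*} [CommRing R]
    (G : SimpleGraph V) [DecidableRel G.Adj] (x : V → R) {u v : V} (huv : ¬G.Adj u v) :
    moveWeight x u v ⬝ᵥ G.adjMatrix R *ᵥ moveWeight x u v =
      x ⬝ᵥ G.adjMatrix R *ᵥ x +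
        2 * x v * ((G.adjMatrix R *ᵥ x) u - (G.adjMatrix R *ᵥ x) v) := by
  have hvu : ¬G.Adj v u := fun h ↦ huv h.symm
  have hlin (y : V → R) : (Pi.single u 1 - Pi.single v 1) ⬝ᵥ y = y u - y v := by
    simp [sub_dotProduct]
  have hquad : (Pi.single u 1 - Pi.single v 1) ⬝ᵥ
      G.adjMatrix R *ᵥ (Pi.single u 1 - Pi.single v 1) = 0 := by
    simp [hlin, mulVec_sub, huv, hvu]
  rw [moveWeight, add_dotProduct_mulVec_add_of_isSymm G.isSymm_adjMatrix, mulVec_smul,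
    dotProduct_smul, smul_dotProduct, smul_dotProduct, hquad, hlin, smul_zero, smul_zero,
    smul_eq_mul]
  ring

variable {R : Type*} [CommRing R] [LinearOrder R] [IsStrictOrderedRing R] (G : SimpleGraph V)
  [DecidableRel G.Adj]

lemma exists_isClique_support_dotProduct_adjMatrix_mulVec_le {x : V → R}
    (hx : x ∈ stdSimplex R V) :
    ∃ y ∈ stdSimplex R V, G.IsClique (support y) ∧
      x ⬝ᵥ G.adjMatrix R *ᵥ x ≤ y ⬝ᵥ G.adjMatrix R *ᵥ y := by
  classical
  obtain ⟨y, hymin⟩ := exists_minimalFor_of_wellFoundedLT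
    (fun y ↦ y ∈ stdSimplex R V ∧ x ⬝ᵥ G.adjMatrix R *ᵥ x ≤ y ⬝ᵥ G.adjMatrix R *ᵥ y)
    support ⟨x, hx, le_rfl⟩
  obtain ⟨hy, hxy⟩ := hymin.prop
  refine ⟨y, hy, fun u hu v hv huv ↦ ?_, hxy⟩
  by_contra hadj
  wlog hle : (G.adjMatrix R *ᵥ y) v ≤ (G.adjMatrix R *ᵥ y) u generalizing u v
  · exact this v hv u hu huv.symm (fun h ↦ hadj h.symm) (le_of_not_ge hle)
  have hgain : y ⬝ᵥ G.adjMatrix R *ᵥ y ≤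
      moveWeight y u v ⬝ᵥ G.adjMatrix R *ᵥ moveWeight y u v := by
    rw [dotProduct_adjMatrix_mulVec_moveWeight G y hadj]
    exact le_add_of_nonneg_right
      (mul_nonneg (mul_nonneg zero_le_two (hy.1 v)) (sub_nonneg.2 hle))
  exact hymin.not_prop_of_lt (support_moveWeight_ssubset huv hu hv)
    ⟨moveWeight_mem_stdSimplex hy huv, hxy.trans hgain⟩

end Symmetrization

section MotzkinStraus

variable {V K : Type*} [Fintype V] [Field K] [LinearOrder K] [IsStrictOrderedRing K]
  (G : SimpleGraph V)

lemma one_div_cliqueNum_le_dotProduct_self {x : V → K} (hx : x ∈ stdSimplex K V)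
    (hclique : G.IsClique (support x)) : 1 / (G.cliqueNum : K) ≤ x ⬝ᵥ x := by
  classical
  have hnonneg : 0 ≤ x ⬝ᵥ x := sum_nonneg fun i _ ↦ mul_self_nonneg (x i)
  have hcard : #(support x).toFinset ≤ G.cliqueNum :=
    SimpleGraph.IsClique.card_le_cliqueNum (tc := by simpa using hclique)
  refine div_le_of_le_mul₀ (Nat.cast_nonneg _) hnonneg ?_
  calc 1 = (∑ i, x i) ^ 2 := by rw [hx.2, one_pow]
    _ ≤ #(support x).toFinset * (x ⬝ᵥ x) := sq_sum_le_card_mul_dotProduct_self (by simp)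
    _ ≤ G.cliqueNum * (x ⬝ᵥ x) := by gcongr
    _ = x ⬝ᵥ x * G.cliqueNum := mul_comm _ _

variable [DecidableRel G.Adj]

lemma dotProduct_adjMatrix_mulVec_le {x : V → K} (hx : x ∈ stdSimplex K V) :
    x ⬝ᵥ G.adjMatrix K *ᵥ x ≤ 1 - 1 / (G.cliqueNum : K) := by
  obtain ⟨y, hy, hclique, hxy⟩ := exists_isClique_support_dotProduct_adjMatrix_mulVec_le G hx
  calc x ⬝ᵥ G.adjMatrix K *ᵥ x ≤ y ⬝ᵥ G.adjMatrix K *ᵥ y := hxy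
    _ = 1 - y ⬝ᵥ y := by
        rw [dotProduct_adjMatrix_mulVec_of_isClique_support G hclique, hy.2, one_pow]
    _ ≤ 1 - 1 / (G.cliqueNum : K) :=
        sub_le_sub_left (one_div_cliqueNum_le_dotProduct_self G hy hclique) 1

lemma exists_dotProduct_adjMatrix_mulVec_eq (hω : G.cliqueNum ≠ 0) :
    ∃ x ∈ stdSimplex K V, x ⬝ᵥ G.adjMatrix K *ᵥ x = 1 - 1 / (G.cliqueNum : K) := by
  obtain ⟨s, hs⟩ := G.exists_isNClique_cliqueNum
  have hsum := s.sum_centroidWeightsIndicator_eq_one_of_card_ne_zero K (hs.card_eq.trans_ne hω)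
  have hclique : G.IsClique (support (s.centroidWeightsIndicator K)) :=
    hs.isClique.subset Set.support_indicator_subset
  refine ⟨s.centroidWeightsIndicator K, ⟨fun i ↦ ?_, hsum⟩, ?_⟩
  · exact Set.indicator_nonneg (fun j _ ↦ by simp) i
  · rw [dotProduct_adjMatrix_mulVec_of_isClique_support G hclique, hsum, one_pow,
      dotProduct_self_centroidWeightsIndicator, hs.card_eq, one_div]

theorem motzkin_straus_general [DecidableEq V] (hω : G.cliqueNum ≠ 0) :
    IsGreatest ((fun x : V → K ↦ ∑ S ∈ G.cliqueFinset 2, ∏ i ∈ S, x i) '' stdSimplex K V)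
      ((1 - 1 / (G.cliqueNum : K)) / 2) := by
  constructor
  · obtain ⟨x, hx, hmax⟩ := exists_dotProduct_adjMatrix_mulVec_eq (K := K) G hω
    refine ⟨x, hx, eq_div_of_mul_eq two_ne_zero ?_⟩
    rw [mul_comm, two_mul_sum_cliqueFinset_two_prod, hmax]
  · rintro _ ⟨x, hx, rfl⟩
    rw [le_div_iff₀' zero_lt_two, two_mul_sum_cliqueFinset_two_prod]
    exact dotProduct_adjMatrix_mulVec_le G hx

end MotzkinStraus

/-- Motzkin–Straus theorem: for a graph `G` with clique number `ω ≥ 2`, the maximum of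
`Σ_{{i,j} ∈ E(G)} x_i x_j` over the standard simplex equals `(1 - 1/ω)/2`.
The edge sum is written as the sum over `2`-cliques of the product of the coordinates. -/
theorem motzkin_straus {n : ℕ} (G : SimpleGraph (Fin n)) [DecidableRel G.Adj]
    (hw : 2 ≤ G.cliqueNum) :
    IsGreatest
      {r : ℝ | ∃ x : Fin n → ℝ, (∀ i, 0 ≤ x i) ∧ (∑ i, x i) = 1 ∧
        (∑ S ∈ G.cliqueFinset 2, ∏ i ∈ S, x i) = r}
      ((1 - 1 / (G.cliqueNum : ℝ)) / 2) := by
  simpa [Set.image, stdSimplex, and_assoc] using motzkin_straus_general (K := ℝ) G (by omega)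
end
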